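/- Let g : ℝ → ℝ be real-analytic, odd, 2π-periodic, not identically zero, and satisfy g'' + A(g)(3⟨g²⟩ g + g³) = 0 on ℝ, where A(g) := ⟨g⁴⟩ + 3⟨g²⟩². Let v̄ be the solution of h'' + 3A(g)(⟨g²⟩ + g²)h = 0 with v̄(0) = 0, v̄'(0) = 1, and let ρ > 0 satisfy v̄(t + 2π) − v̄(t) = ρ g'(t)/g'(0) for all t. Then ∫₀^{2π} g(t)³ v̄(t) dt = ρ g'(0)/(2 A(g)). -/

import Mathlib

open Real

/-- Average of a function over one period `[0, 2π]`. -/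
noncomputable def avg (f : ℝ → ℝ) : ℝ := (1 / (2 * π)) * ∫ t in (0:ℝ)..(2 * π), f t

/-! The equation of `v` is the linearization along `g` of the equation of `g`. For
`g'' + b g + A g ^ (n + 1) = 0` it reads `v'' + (b + (n + 1) A g ^ n) v = 0`, so the Wronskian
`v g' - v' g` has derivative `n A g ^ (n + 1) v`: the linear terms cancel. Over a period of `g` that
starts at a zero of `g`, the Wronskian grows by `g'` times the increment of `v`. -/

section Wronskian

variable {𝔸 : Type*} [NormedRing 𝔸] [NormedAlgebra ℝ 𝔸] {u v : ℝ → 𝔸}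

/-- The Wronskian `u v' - u' v` of two functions of a real variable, whose increments are the
boundary terms in Lagrange's identity. The order of the factors matters when `𝔸` is not
commutative. -/
noncomputable def wronskian (u v : ℝ → 𝔸) (t : ℝ) : 𝔸 := u t * deriv v t - deriv u t * v t

theorem hasDerivAt_wronskian {t : ℝ} (hu : DifferentiableAt ℝ u t)
    (hu' : DifferentiableAt ℝ (deriv u) t) (hv : DifferentiableAt ℝ v t)
    (hv' : DifferentiableAt ℝ (deriv v) t) :
    HasDerivAt (wronskian u v) (u t * deriv (deriv v) t - deriv (deriv u) t * v t) t := by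
  refine ((hu.hasDerivAt.mul hv'.hasDerivAt).sub (hu'.hasDerivAt.mul hv.hasDerivAt)).congr_deriv ?_
  abel

theorem integral_mul_deriv_deriv_sub_eq_wronskian_sub [CompleteSpace 𝔸] (hu : ContDiff ℝ 2 u)
    (hv : ContDiff ℝ 2 v) (α β : ℝ) :
    ∫ t in α..β, (u t * deriv (deriv v) t - deriv (deriv u) t * v t) =
      wronskian u v β - wronskian u v α := by
  have continuous_deriv_deriv {f : ℝ → 𝔸} (hf : ContDiff ℝ 2 f) : Continuous (deriv (deriv f)) :=
    (hf.iterate_deriv' 0 2).continuous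
  refine intervalIntegral.integral_eq_sub_of_hasDerivAt
    (fun t _ => hasDerivAt_wronskian (hu.differentiable two_ne_zero t)
      (hu.differentiable_deriv_two t) (hv.differentiable two_ne_zero t)
      (hv.differentiable_deriv_two t))
    (Continuous.intervalIntegrable ?_ α β)
  exact (hu.continuous.mul (continuous_deriv_deriv hv)).sub
    ((continuous_deriv_deriv hu).mul hv.continuous)

end Wronskian

section Periodic

theorem periodic_deriv {𝕜 E : Type*} [NontriviallyNormedField 𝕜] [NormedAddCommGroup E]
    [NormedSpace 𝕜 E] {f : 𝕜 → E} {T : 𝕜} (hf : Function.Periodic f T) :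
    Function.Periodic (deriv f) T := fun t => by
  rw [← deriv_comp_add_const, hf.funext]

variable {T : ℝ}

theorem wronskian_add_period_sub {𝔸 : Type*} [NormedRing 𝔸] [NormedAlgebra ℝ 𝔸] {u g : ℝ → 𝔸}
    (hg : Function.Periodic g T) {a : ℝ} (ha : g a = 0) :
    wronskian u g (a + T) - wronskian u g a = (u (a + T) - u a) * deriv g a := by
  simp only [wronskian, hg a, periodic_deriv hg a, ha, mul_zero, sub_zero, sub_mul]

theorem integral_pos_of_periodic {f : ℝ → ℝ} (hf : Continuous f) (hT : 0 < T)
    (hper : Function.Periodic f T) (hnonneg : ∀ t, 0 ≤ f t) (hne : f ≠ 0) :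
    0 < ∫ t in (0:ℝ)..T, f t := by
  obtain ⟨x, hx⟩ := Function.ne_iff.mp hne
  obtain ⟨y, hy, hxy⟩ := hper.exists_mem_Ico₀ hT x
  exact intervalIntegral.integral_pos hT hf.continuousOn (fun t _ => hnonneg t)
    ⟨y, Set.Ico_subset_Icc_self hy, (hnonneg y).lt_of_ne' (hxy ▸ hx)⟩

theorem avg_pow_pos_of_even {g : ℝ → ℝ} (hg : Continuous g) (hper : Function.Periodic g (2 * π))
    (hne : g ≠ 0) {n : ℕ} (hn : Even n) : 0 < avg (fun t => g t ^ n) := by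
  refine mul_pos (by positivity) (integral_pos_of_periodic (hg.pow n) two_pi_pos
    (hper.comp (· ^ n)) (fun t => hn.pow_nonneg (g t)) fun h => hne ?_)
  exact funext fun t => eq_zero_of_pow_eq_zero (congrFun h t)

end Periodic

section LinearizedEquation

variable {A : ℝ} {n : ℕ} {b g v : ℝ → ℝ}

theorem integral_pow_succ_mul_eq_wronskian_sub (hg : ContDiff ℝ 2 g)
    (hode : ∀ t, deriv (deriv g) t + (b t * g t + A * g t ^ (n + 1)) = 0) (hv : ContDiff ℝ 2 v)
    (hvode : ∀ t, deriv (deriv v) t + (b t + (n + 1) * A * g t ^ n) * v t = 0) (α β : ℝ) :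
    n * A * ∫ t in α..β, g t ^ (n + 1) * v t = wronskian v g β - wronskian v g α := by
  rw [← integral_mul_deriv_deriv_sub_eq_wronskian_sub hv hg, ← intervalIntegral.integral_const_mul]
  refine intervalIntegral.integral_congr fun t _ => ?_
  linear_combination g t * hvode t - v t * hode t

theorem stmt_6_general (hA : A ≠ 0) (hn : n ≠ 0) (hg : ContDiff ℝ 2 g) {T : ℝ}
    (hper : Function.Periodic g T) {a : ℝ} (ha : g a = 0)
    (hode : ∀ t, deriv (deriv g) t + (b t * g t + A * g t ^ (n + 1)) = 0) (hv : ContDiff ℝ 2 v)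
    (hvode : ∀ t, deriv (deriv v) t + (b t + (n + 1) * A * g t ^ n) * v t = 0) :
    ∫ t in a..a + T, g t ^ (n + 1) * v t = (v (a + T) - v a) * deriv g a / (n * A) := by
  rw [eq_div_iff (by positivity), mul_comm, integral_pow_succ_mul_eq_wronskian_sub hg hode hv hvode,
    wronskian_add_period_sub hper ha]

end LinearizedEquation

theorem stmt_6 (g : ℝ → ℝ)
    (han : ∀ t : ℝ, AnalyticAt ℝ g t)
    (hodd : ∀ t : ℝ, g (-t) = -g t)
    (hper : Function.Periodic g (2 * π))
    (hne : g ≠ 0)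
    (A : ℝ) (hA : A = avg (fun s => g s ^ 4) + 3 * avg (fun s => g s ^ 2) ^ 2)
    (hode : ∀ t : ℝ, deriv (deriv g) t
        + A * (3 * avg (fun s => g s ^ 2) * g t + g t ^ 3) = 0)
    (v : ℝ → ℝ) (hv : ContDiff ℝ 2 v)
    (hvode : ∀ t : ℝ, deriv (deriv v) t
        + 3 * A * (avg (fun s => g s ^ 2) + g t ^ 2) * v t = 0)
    (hv0 : v 0 = 0) (hv0' : deriv v 0 = 1)
    (ρ : ℝ) (hρ : 0 < ρ)
    (hρv : ∀ t : ℝ, v (t + 2 * π) - v t = ρ * (deriv g t / deriv g 0)) :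
    ∫ t in (0:ℝ)..(2 * π), g t ^ 3 * v t = ρ * deriv g 0 / (2 * A) := by
  have hg : ContDiff ℝ 2 g := contDiff_iff_contDiffAt.mpr fun t => (han t).contDiffAt
  have hA0 : A ≠ 0 := by
    have fourth_moment_pos := avg_pow_pos_of_even hg.continuous hper hne (n := 4) (by decide)
    rw [hA]
    positivity
  have increment : v (0 + 2 * π) - v 0 = ρ * (deriv g 0 / deriv g 0) := hρv 0
  have key := stmt_6_general (n := 2) (b := fun _ => 3 * A * avg fun s => g s ^ 2) hA0
    two_ne_zero hg hper (Function.Odd.map_zero hodd) (fun t => by linear_combination hode t)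
    hv (fun t => by push_cast; linear_combination hvode t)
  rwa [increment, mul_assoc, div_self_mul_self, zero_add, Nat.cast_ofNat] at key
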